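/- Let m, n ≥ 1, let Σ ∈ ℝ^{n×n} and Σ_N ∈ ℝ^{mn×mn} be symmetric positive definite, let θ, θ̂ ∈ ℝ^{m×n}, φ ∈ ℝᵐ, and c ≥ 0, and suppose vec(θ − θ̂)ᵀ Σ_N⁻¹ vec(θ − θ̂) ≤ c, where vec denotes column-stacking. Set γ := (θ − θ̂)ᵀ φ, let ρ be the measure on ℝⁿ with Lebesgue density w ↦ min(g_{0,Σ}(w), g_{−γ,Σ}(w)), and let v be the pushforward of ρ under w ↦ (θᵀφ + w, θᵀφ + w). Then v is a sub-probability coupling of N(θ̂ᵀφ, Σ) and N(θᵀφ, Σ) over the diagonal {(a,b) : a = b} with respect to δ := 1 − 2Φ(−(√r / 2) · ‖φ‖), where r := ‖Σ⁻¹‖ · ‖Σ_N‖ · c and ‖·‖ denotes the spectral norm on matrices and the Euclidean norm on vectors; in particular v(ℝⁿ × ℝⁿ) = 2Φ(−½√(γᵀΣ⁻¹γ)) ≥ 2Φ(−(√r/2)‖φ‖) = 1 − δ. -/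

import Mathlib

open Matrix MeasureTheory Set

/-- Density of the multivariate normal distribution `N(μ, S)` with respect to Lebesgue
measure. -/
noncomputable def gaussDensity {ι : Type*} [Fintype ι] [DecidableEq ι] (μ : ι → ℝ)
    (S : Matrix ι ι ℝ) (w : ι → ℝ) : ℝ :=
  (2 * Real.pi) ^ (-(Fintype.card ι : ℝ) / 2) * S.det ^ (-(1 : ℝ) / 2) *
    Real.exp (-(1 / 2) * ((w - μ) ⬝ᵥ (S⁻¹ *ᵥ (w - μ))))

/-- The Gaussian probability measure `N(μ, S)` on `ℝⁿ`. -/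
noncomputable def gaussMeasure {ι : Type*} [Fintype ι] [DecidableEq ι] (μ : ι → ℝ)
    (S : Matrix ι ι ℝ) : Measure (ι → ℝ) :=
  volume.withDensity fun w => ENNReal.ofReal (gaussDensity μ S w)

/-- The standard normal cumulative distribution function. -/
noncomputable def stdNormalCdf (ζ : ℝ) : ℝ :=
  ∫ β in Set.Iic ζ, (2 * Real.pi) ^ (-(1 : ℝ) / 2) * Real.exp (-β ^ 2 / 2)

/-- The spectral norm (operator norm induced by the Euclidean norms) of a real matrix. -/
noncomputable def specNorm {a b : Type*} [Fintype a] [Fintype b] [DecidableEq b]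
    (M : Matrix a b ℝ) : ℝ :=
  ‖LinearMap.toContinuousLinearMap (Matrix.toEuclideanLin M)‖

/-- The Euclidean norm of a real vector. -/
noncomputable def euclNorm {ι : Type*} [Fintype ι] (x : ι → ℝ) : ℝ :=
  Real.sqrt (x ⬝ᵥ x)

/-- The column-stacking (vectorization) of an `m × n` matrix. -/
def vecOf {m n : ℕ} (Δ : Matrix (Fin m) (Fin n) ℝ) : Fin n × Fin m → ℝ :=
  fun q => Δ q.2 q.1


open ProbabilityTheory

lemma pi_gauss_withDensity {n : ℕ} :
    Measure.pi (fun _ : Fin n => gaussianReal 0 1) =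
      (volume : Measure (Fin n → ℝ)).withDensity
        (fun z => ENNReal.ofReal (∏ i, gaussianPDFReal 0 1 (z i))) := by
  apply Measure.pi_eq
  intro s hs
  have hms : MeasurableSet (Set.pi univ s) := MeasurableSet.univ_pi hs
  rw [withDensity_apply _ hms, ← lintegral_indicator hms]
  have h1 : ∀ z : Fin n → ℝ, (Set.pi univ s).indicator
      (fun z => ENNReal.ofReal (∏ i, gaussianPDFReal 0 1 (z i))) z
      = ENNReal.ofReal (∏ i, (s i).indicator (gaussianPDFReal 0 1) (z i)) := by
    intro z
    by_cases hz : z ∈ Set.pi univ s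
    · rw [indicator_of_mem hz]
      congr 1
      refine Finset.prod_congr rfl fun i _ => ?_
      rw [indicator_of_mem (hz i (mem_univ i))]
    · rw [indicator_of_notMem hz]
      simp only [Set.mem_pi, mem_univ, true_implies, not_forall] at hz
      obtain ⟨i, hi⟩ := hz
      rw [Finset.prod_eq_zero (Finset.mem_univ i) (indicator_of_notMem hi _)]
      simp
  simp_rw [h1]
  have hint : ∀ i, Integrable ((s i).indicator (gaussianPDFReal 0 1)) volume := fun i =>
    (integrable_gaussianPDFReal 0 1).indicator (hs i)
  have hnn : ∀ i x, 0 ≤ (s i).indicator (gaussianPDFReal 0 1) x := fun i x =>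
    indicator_nonneg (fun y _ => gaussianPDFReal_nonneg 0 1 y) x
  have hint' : Integrable (fun z : Fin n → ℝ =>
      ∏ i, (s i).indicator (gaussianPDFReal 0 1) (z i)) volume := Integrable.fintype_prod hint
  rw [← ofReal_integral_eq_lintegral_ofReal hint'
    (ae_of_all _ fun z => Finset.prod_nonneg fun i _ => hnn i _),
    integral_fintype_prod_volume_eq_prod (fun i => (s i).indicator (gaussianPDFReal 0 1)),
    ENNReal.ofReal_prod_of_nonneg (fun i _ => integral_nonneg (hnn i))]
  refine Finset.prod_congr rfl fun i _ => ?_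
  rw [gaussianReal_apply_eq_integral 0 one_ne_zero, integral_indicator (hs i)]

lemma pi_gauss_map_dot {n : ℕ} (a : Fin n → ℝ) :
    (Measure.pi (fun _ : Fin n => gaussianReal 0 1)).map (fun z => z ⬝ᵥ a) =
      gaussianReal 0 (a ⬝ᵥ a).toNNReal := by
  let L : StrongDual ℝ (EuclideanSpace ℝ (Fin n)) := innerSL ℝ (WithLp.toLp 2 a)
  have h := IsGaussian.map_eq_gaussianReal (μ := stdGaussian (EuclideanSpace ℝ (Fin n))) L
  rw [integral_strongDual_stdGaussian, variance_dual_stdGaussian, ← map_pi_eq_stdGaussian,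
    Measure.map_map (by fun_prop) (by fun_prop)] at h
  have e1 : (L ∘ (WithLp.toLp 2) : (Fin n → ℝ) → ℝ) = fun z => z ⬝ᵥ a := by
    ext z
    simp [L, PiLp.inner_apply, dotProduct]
  have e2 : ‖L‖ ^ 2 = a ⬝ᵥ a := by
    simp only [L, innerSL_apply_norm, EuclideanSpace.norm_sq_eq]
    simp [dotProduct, sq]
  rw [e1, e2] at h
  exact h

lemma exists_factor {n : ℕ} (S : Matrix (Fin n) (Fin n) ℝ) (hS : S.PosDef) :
    ∃ C : Matrix (Fin n) (Fin n) ℝ, S⁻¹ = Cᵀ * C ∧ C.det ≠ 0 ∧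
      S.det ^ (-(1 : ℝ) / 2) = |C.det| := by
  open scoped MatrixOrder in
  obtain ⟨C, hC⟩ := CStarAlgebra.nonneg_iff_eq_star_mul_self.mp hS.inv.posSemidef.nonneg
  have hC' : S⁻¹ = Cᵀ * C := by
    rw [hC, star_eq_conjTranspose, conjTranspose_eq_transpose_of_trivial]
  have hd : (S⁻¹).det = C.det ^ 2 := by rw [hC', det_mul, det_transpose, sq]
  have hdp := hS.det_pos
  rw [det_nonsing_inv, Ring.inverse_eq_inv'] at hd
  refine ⟨C, hC', ?_, ?_⟩
  · intro h0
    rw [h0] at hd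
    have := inv_pos.mpr hdp
    simp_all
  · rw [← Real.sqrt_sq_eq_abs, ← hd, Real.sqrt_eq_rpow, Real.inv_rpow hdp.le, ← Real.rpow_neg hdp.le]
    congr 1
    norm_num

lemma quad_factor {n : ℕ} (C : Matrix (Fin n) (Fin n) ℝ) (x y : Fin n → ℝ) :
    x ⬝ᵥ ((Cᵀ * C) *ᵥ y) = (C *ᵥ x) ⬝ᵥ (C *ᵥ y) := by
  rw [← mulVec_mulVec, dotProduct_mulVec, vecMul_transpose]

lemma gaussDensity_factor {n : ℕ} (S C : Matrix (Fin n) (Fin n) ℝ)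
    (hC : S⁻¹ = Cᵀ * C) (hd : S.det ^ (-(1 : ℝ) / 2) = |C.det|) (w : Fin n → ℝ) :
    gaussDensity 0 S w = |C.det| * ∏ i, gaussianPDFReal 0 1 ((C *ᵥ w) i) := by
  unfold gaussDensity
  rw [hd, hC, sub_zero, quad_factor]
  simp only [gaussianPDFReal, Finset.prod_mul_distrib, ← Real.exp_sum]
  simp only [dotProduct, NNReal.coe_one, mul_one, sub_zero, Finset.prod_const, Finset.card_univ,
    Fintype.card_fin]
  have h1 : (2 * Real.pi) ^ (-(n : ℝ) / 2) = (√(2 * Real.pi))⁻¹ ^ n := by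
    rw [Real.sqrt_eq_rpow, ← Real.rpow_neg (by positivity), ← Real.rpow_natCast,
      ← Real.rpow_mul (by positivity)]
    congr 1; ring
  rw [h1, Finset.mul_sum]
  have h2 : ∀ i, -(1 / 2) * ((C *ᵥ w) i * (C *ᵥ w) i) = -((C *ᵥ w) i) ^ 2 / 2 := by
    intro i; ring
  simp_rw [h2]
  ring

lemma gaussDensity_nonneg {n : ℕ} (μ : Fin n → ℝ) (S : Matrix (Fin n) (Fin n) ℝ) (hS : S.PosDef)
    (w : Fin n → ℝ) : 0 ≤ gaussDensity μ S w := by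
  unfold gaussDensity
  have := hS.det_pos
  positivity

lemma gaussDensity_cont {n : ℕ} (μ : Fin n → ℝ) (S : Matrix (Fin n) (Fin n) ℝ) :
    Continuous (gaussDensity μ S) := by
  unfold gaussDensity
  fun_prop

lemma gaussMeasure_halfspace {n : ℕ} (S : Matrix (Fin n) (Fin n) ℝ) (hS : S.PosDef)
    (γ : Fin n → ℝ) (s : Set ℝ) (hs : MeasurableSet s) :
    gaussMeasure 0 S {w | w ⬝ᵥ (S⁻¹ *ᵥ γ) ∈ s} =
      gaussianReal 0 (γ ⬝ᵥ (S⁻¹ *ᵥ γ)).toNNReal s := by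
  obtain ⟨C, hC, hC0, hd⟩ := exists_factor S hS
  have hmeas : ∀ a : Fin n → ℝ, Measurable fun z : Fin n → ℝ => z ⬝ᵥ a := fun a => by
    unfold dotProduct; fun_prop
  have hset : {w | w ⬝ᵥ (S⁻¹ *ᵥ γ) ∈ s} =
      (toLin' C) ⁻¹' ((fun z : Fin n → ℝ => z ⬝ᵥ (C *ᵥ γ)) ⁻¹' s) := by
    ext w; simp [hC, quad_factor]
  have hT : MeasurableSet ((fun z : Fin n → ℝ => z ⬝ᵥ (C *ᵥ γ)) ⁻¹' s) := hmeas _ hs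
  have hCm : Measurable (toLin' C : (Fin n → ℝ) → (Fin n → ℝ)) :=
    (LinearMap.continuous_of_finiteDimensional _).measurable
  have hpm : Measurable fun z : Fin n → ℝ => ENNReal.ofReal (∏ i, gaussianPDFReal 0 1 (z i)) := by
    have := measurable_gaussianPDFReal 0 1
    fun_prop
  rw [hC, quad_factor, ← pi_gauss_map_dot, Measure.map_apply (hmeas _) hs, ← hC, hset,
    pi_gauss_withDensity, withDensity_apply _ hT, gaussMeasure, withDensity_apply _ (hCm hT)]
  have hf : ∀ w, ENNReal.ofReal (gaussDensity 0 S w) = ENNReal.ofReal |C.det| *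
      ENNReal.ofReal (∏ i, gaussianPDFReal 0 1 ((toLin' C w) i)) := by
    intro w
    rw [gaussDensity_factor S C hC hd, ENNReal.ofReal_mul (abs_nonneg _), toLin'_apply]
  simp_rw [hf]
  have hpm2 : Measurable fun w : Fin n → ℝ =>
      ENNReal.ofReal (∏ i, gaussianPDFReal 0 1 ((toLin' C w) i)) := hpm.comp hCm
  rw [lintegral_const_mul _ hpm2, ← setLIntegral_map hT hpm hCm,
    Real.map_matrix_volume_pi_eq_smul_volume_pi hC0, Measure.restrict_smul, lintegral_smul_measure,
    smul_eq_mul, ← mul_assoc, ← ENNReal.ofReal_mul (abs_nonneg _), ← abs_mul, mul_inv_cancel₀ hC0]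
  simp

lemma stdCdf_eq (t : ℝ) : gaussianReal 0 1 (Iic t) = ENNReal.ofReal (stdNormalCdf t) := by
  rw [gaussianReal_apply_eq_integral 0 one_ne_zero, stdNormalCdf]
  congr 1
  refine integral_congr_ae (ae_of_all _ fun x => ?_)
  simp only [gaussianPDFReal, NNReal.coe_one, mul_one, sub_zero]
  congr 1
  rw [Real.sqrt_eq_rpow, ← Real.rpow_neg (by positivity)]
  congr 1; norm_num

lemma stdCdf_sym (t : ℝ) : gaussianReal 0 1 (Ioi t) = gaussianReal 0 1 (Iic (-t)) := by
  have h : gaussianReal 0 1 (Ici t) = gaussianReal 0 1 (Iic (-t)) := by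
    conv_rhs => rw [← neg_zero, ← gaussianReal_map_neg,
      Measure.map_apply measurable_neg measurableSet_Iic]
    congr 1
    ext x; simp
  have := nullSingletonClass_gaussianReal (μ := 0) (v := 1) one_ne_zero
  rw [← h]
  exact measure_congr Ioi_ae_eq_Ici

lemma two_tail (t : ℝ) : gaussianReal 0 1 (Iic (-t)) + gaussianReal 0 1 (Ioi t) =
    ENNReal.ofReal (2 * stdNormalCdf (-t)) := by
  rw [stdCdf_sym, stdCdf_eq, ← two_mul, ENNReal.ofReal_mul (by norm_num)]
  simp

lemma two_tail_q (q : ℝ) (hq : 0 ≤ q) :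
    gaussianReal 0 q.toNNReal (Iic (-(q / 2))) + gaussianReal 0 q.toNNReal (Ioi (q / 2)) =
      ENNReal.ofReal (2 * stdNormalCdf (-(1 / 2) * √q)) := by
  have e : -(1 / 2) * √q = -(√q / 2) := by ring
  rw [e, ← two_tail]
  rcases hq.eq_or_lt with rfl | hq
  · have : ∀ ν : Measure ℝ, IsProbabilityMeasure ν → ν (Iic (-(0/2))) + ν (Ioi (0/2)) = 1 := by
      intro ν hν
      have h := prob_compl_eq_one_sub (μ := ν) (measurableSet_Iic (a := (0:ℝ)))
      rw [compl_Iic] at h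
      norm_num
      rw [h]
      exact add_tsub_cancel_of_le prob_le_one
    rw [Real.sqrt_zero, this _ inferInstance, this _ inferInstance]
  · have hs : 0 < √q := Real.sqrt_pos.mpr hq
    have hsq : √q * √q = q := Real.mul_self_sqrt hq.le
    have hm := gaussianReal_map_const_mul (μ := 0) (v := 1) (√q)
    have e2 : NNReal.mk ((√q) ^ 2) (sq_nonneg _) * 1 = q.toNNReal := by
      rw [mul_one]
      apply NNReal.coe_injective
      rw [Real.coe_toNNReal _ hq.le, NNReal.coe_mk, Real.sq_sqrt hq.le]
    rw [mul_zero, e2] at hm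
    rw [← hm, Measure.map_apply (by fun_prop) measurableSet_Iic,
      Measure.map_apply (by fun_prop) measurableSet_Ioi]
    congr 2
    · ext x
      simp only [mem_preimage, mem_Iic]
      constructor <;> intro h <;> nlinarith
    · ext x
      simp only [mem_preimage, mem_Ioi]
      constructor <;> intro h <;> nlinarith

lemma stdCdf_mono {s t : ℝ} (h : s ≤ t) :
    ENNReal.ofReal (2 * stdNormalCdf s) ≤ ENNReal.ofReal (2 * stdNormalCdf t) := by
  rw [ENNReal.ofReal_mul (by norm_num), ENNReal.ofReal_mul (by norm_num), ← stdCdf_eq, ← stdCdf_eq]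
  gcongr

lemma min_mass {n : ℕ} (S : Matrix (Fin n) (Fin n) ℝ) (hS : S.PosDef) (γ : Fin n → ℝ) :
    ∫⁻ w, ENNReal.ofReal (min (gaussDensity 0 S w) (gaussDensity (-γ) S w)) =
      ENNReal.ofReal (2 * stdNormalCdf (-(1 / 2) * √(γ ⬝ᵥ (S⁻¹ *ᵥ γ)))) := by
  set q := γ ⬝ᵥ (S⁻¹ *ᵥ γ) with hq
  have hq0 : 0 ≤ q := by
    have := hS.inv.posSemidef.dotProduct_mulVec_nonneg γ
    simpa using this
  have hmeas : Measurable fun z : Fin n → ℝ => z ⬝ᵥ (S⁻¹ *ᵥ γ) := by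
    unfold dotProduct; fun_prop
  have hsymm : ∀ w, γ ⬝ᵥ (S⁻¹ *ᵥ w) = w ⬝ᵥ (S⁻¹ *ᵥ γ) := by
    intro w
    have : (S⁻¹)ᵀ = S⁻¹ := by
      have := hS.inv.isHermitian
      rwa [IsHermitian, conjTranspose_eq_transpose_of_trivial] at this
    rw [dotProduct_mulVec, ← mulVec_transpose, this, dotProduct_comm]
  have hshift : ∀ w, gaussDensity (-γ) S w = gaussDensity 0 S (w + γ) := by
    intro w; simp [gaussDensity]
  have hcmp : ∀ w, gaussDensity 0 S w ≤ gaussDensity (-γ) S w ↔ w ⬝ᵥ (S⁻¹ *ᵥ γ) ≤ -(q / 2) := by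
    intro w
    have hpos : 0 < (2 * Real.pi) ^ (-(Fintype.card (Fin n) : ℝ) / 2) * S.det ^ (-(1 : ℝ) / 2) := by
      have := hS.det_pos
      positivity
    unfold gaussDensity
    rw [mul_le_mul_iff_right₀ hpos, Real.exp_le_exp, sub_zero, sub_neg_eq_add, mulVec_add,
      add_dotProduct, dotProduct_add, dotProduct_add, hsymm, ← hq]
    constructor <;> intro h <;> linarith
  let H : Set (Fin n → ℝ) := {w | w ⬝ᵥ (S⁻¹ *ᵥ γ) ∈ Iic (-(q / 2))}
  have hH : MeasurableSet H := hmeas measurableSet_Iic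
  rw [← lintegral_add_compl _ hH, ← two_tail_q q hq0, ← gaussMeasure_halfspace S hS γ _
    measurableSet_Iic, ← gaussMeasure_halfspace S hS γ _ measurableSet_Ioi]
  congr 1
  · rw [gaussMeasure, withDensity_apply _ hH]
    refine setLIntegral_congr_fun hH fun w hw => ?_
    rw [min_eq_left ((hcmp w).mpr hw)]
  · let K : Set (Fin n → ℝ) := {w | w ⬝ᵥ (S⁻¹ *ᵥ γ) ∈ Ioi (q / 2)}
    have hK : MeasurableSet K := hmeas measurableSet_Ioi
    rw [gaussMeasure, withDensity_apply _ hK, ← lintegral_indicator hK,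
      ← lintegral_indicator hH.compl,
      ← lintegral_add_right_eq_self (K.indicator _) γ]
    refine lintegral_congr fun w => ?_
    have hiff : w ∈ Hᶜ ↔ w + γ ∈ K := by
      simp only [H, K, mem_compl_iff, mem_ofPred_eq, mem_Iic, mem_Ioi, add_dotProduct, ← hq, not_le]
      constructor <;> intro h <;> linarith
    by_cases hw : w ∈ Hᶜ
    · rw [indicator_of_mem hw, indicator_of_mem (hiff.mp hw), ← hshift, min_eq_right]
      refine le_of_lt (not_le.mp fun h => hw ((hcmp w).mp h))
    · rw [indicator_of_notMem hw, indicator_of_notMem (fun h => hw (hiff.mpr h))]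

lemma spec_quad {ι : Type*} [Fintype ι] [DecidableEq ι] (M : Matrix ι ι ℝ) (x : ι → ℝ) :
    x ⬝ᵥ (M *ᵥ x) ≤ specNorm M * (x ⬝ᵥ x) := by
  let T := LinearMap.toContinuousLinearMap (Matrix.toEuclideanLin M)
  let X : EuclideanSpace ℝ ι := WithLp.toLp 2 x
  have h1 : inner ℝ (T X) X = x ⬝ᵥ (M *ᵥ x) := by
    simp [T, X, EuclideanSpace.inner_eq_star_dotProduct]
  have h2 : x ⬝ᵥ x = ‖X‖ * ‖X‖ := by
    rw [← real_inner_self_eq_norm_mul_norm, EuclideanSpace.inner_eq_star_dotProduct]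
    simp [X]
  rw [← h1, h2]
  calc inner ℝ (T X) X ≤ ‖T X‖ * ‖X‖ := real_inner_le_norm _ _
    _ ≤ (‖T‖ * ‖X‖) * ‖X‖ := by gcongr; exact T.le_opNorm X
    _ = specNorm M * (‖X‖ * ‖X‖) := by rw [mul_assoc]; rfl

lemma specNorm_nonneg {ι : Type*} [Fintype ι] [DecidableEq ι] (M : Matrix ι ι ℝ) :
    0 ≤ specNorm M := norm_nonneg _

lemma spec_inv {ι : Type*} [Fintype ι] [DecidableEq ι] (M : Matrix ι ι ℝ) (hM : M.PosDef)
    (x : ι → ℝ) : x ⬝ᵥ x ≤ specNorm M * (x ⬝ᵥ (M⁻¹ *ᵥ x)) := by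
  open scoped MatrixOrder in
  obtain ⟨C, hC⟩ := CStarAlgebra.nonneg_iff_eq_star_mul_self.mp hM.posSemidef.nonneg
  have hC' : M = Cᵀ * C := by
    rw [hC, star_eq_conjTranspose, conjTranspose_eq_transpose_of_trivial]
  have hu : IsUnit M.det := hM.det_pos.ne'.isUnit
  set y := M⁻¹ *ᵥ x with hy
  have hx : x = M *ᵥ y := by rw [hy, mulVec_mulVec, mul_nonsing_inv _ hu, one_mulVec]
  -- x·x = (C y)·(C x), Cauchy-Schwarz
  have e1 : x ⬝ᵥ x = (C *ᵥ x) ⬝ᵥ (C *ᵥ y) := by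
    conv_lhs => arg 2; rw [hx, hC', ← mulVec_mulVec]
    rw [dotProduct_mulVec, vecMul_transpose]
  have e2 : x ⬝ᵥ y = (C *ᵥ y) ⬝ᵥ (C *ᵥ y) := by
    rw [dotProduct_comm]
    conv_lhs => arg 2; rw [hx, hC', ← mulVec_mulVec]
    rw [dotProduct_mulVec, vecMul_transpose]
  have e3 : x ⬝ᵥ (M *ᵥ x) = (C *ᵥ x) ⬝ᵥ (C *ᵥ x) := by
    rw [hC', ← mulVec_mulVec, dotProduct_mulVec, vecMul_transpose]
  have cs : (x ⬝ᵥ x) ^ 2 ≤ (x ⬝ᵥ (M *ᵥ x)) * (x ⬝ᵥ y) := by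
    rw [e1, e2, e3]
    have := Finset.sum_mul_sq_le_sq_mul_sq Finset.univ (C *ᵥ x) (C *ᵥ y)
    simpa [dotProduct, sq] using this
  have hq := spec_quad M x
  have hxy : 0 ≤ x ⬝ᵥ y := by
    rw [e2]; exact Finset.sum_nonneg fun i _ => mul_self_nonneg _
  have hxx : 0 ≤ x ⬝ᵥ x := Finset.sum_nonneg fun i _ => mul_self_nonneg _
  rcases hxx.eq_or_lt with h0 | h0
  · rw [← h0]; exact mul_nonneg (specNorm_nonneg _) hxy
  · have : (x ⬝ᵥ x) * (x ⬝ᵥ x) ≤ (x ⬝ᵥ x) * (specNorm M * (x ⬝ᵥ y)) := by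
      nlinarith [mul_le_mul_of_nonneg_right hq hxy]
    exact le_of_mul_le_mul_left this h0

lemma frob_bound {m n : ℕ} (Δ : Matrix (Fin m) (Fin n) ℝ) (φ : Fin m → ℝ) :
    (Δᵀ *ᵥ φ) ⬝ᵥ (Δᵀ *ᵥ φ) ≤ (vecOf Δ ⬝ᵥ vecOf Δ) * (φ ⬝ᵥ φ) := by
  have hv : vecOf Δ ⬝ᵥ vecOf Δ = ∑ j, ∑ i, Δ i j * Δ i j := by
    simp only [dotProduct, vecOf, Fintype.sum_prod_type]
  rw [hv, Finset.sum_mul]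
  refine Finset.sum_le_sum fun j _ => ?_
  have := Finset.sum_mul_sq_le_sq_mul_sq Finset.univ (fun i => Δ i j) φ
  simpa [sq, dotProduct, mulVec] using this

/-- **Theorem 5 of the paper at a fixed state-input pair.**
For every parameter `θ` in the credible ellipsoid of radius `c` around the estimate `θ̂`,
the pushforward `v` of the measure with density `min(g_{0,S}, g_{−γ,S})` (with
`γ = (θ − θ̂)ᵀ φ`) under `w ↦ (θᵀφ + w, θᵀφ + w)` is a sub-probability coupling of
`N(θ̂ᵀφ, S)` and `N(θᵀφ, S)` over the diagonal with respect to
`δ := 1 − 2 Φ(−(√r/2)‖φ‖)`, where `r := ‖S⁻¹‖ ‖Σ_N‖ c`. -/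
theorem gauss_subprob_coupling_credible {m n : ℕ} (hm : 1 ≤ m) (hn : 1 ≤ n)
    (S : Matrix (Fin n) (Fin n) ℝ) (hS : S.PosDef)
    (SN : Matrix (Fin n × Fin m) (Fin n × Fin m) ℝ) (hSN : SN.PosDef)
    (θ θhat : Matrix (Fin m) (Fin n) ℝ) (φ : Fin m → ℝ) (c : ℝ) (hc : 0 ≤ c)
    (hmem : vecOf (θ - θhat) ⬝ᵥ (SN⁻¹ *ᵥ vecOf (θ - θhat)) ≤ c) :
    let γ : Fin n → ℝ := (θ - θhat)ᵀ *ᵥ φ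
    let ρ : Measure (Fin n → ℝ) :=
      volume.withDensity fun w =>
        ENNReal.ofReal (min (gaussDensity 0 S w) (gaussDensity (-γ) S w))
    let v : Measure ((Fin n → ℝ) × (Fin n → ℝ)) :=
      ρ.map fun w => (θᵀ *ᵥ φ + w, θᵀ *ᵥ φ + w)
    let r : ℝ := specNorm S⁻¹ * specNorm SN * c
    v univ = v {q : (Fin n → ℝ) × (Fin n → ℝ) | q.1 = q.2} ∧
    v univ = ENNReal.ofReal (2 * stdNormalCdf (-(1 / 2) * Real.sqrt (γ ⬝ᵥ (S⁻¹ *ᵥ γ)))) ∧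
    ENNReal.ofReal (2 * stdNormalCdf (-(Real.sqrt r / 2) * euclNorm φ)) ≤ v univ ∧
    (∀ A : Set (Fin n → ℝ), MeasurableSet A →
      v (A ×ˢ (univ : Set (Fin n → ℝ))) ≤ gaussMeasure (θhatᵀ *ᵥ φ) S A) ∧
    (∀ A : Set (Fin n → ℝ), MeasurableSet A →
      v ((univ : Set (Fin n → ℝ)) ×ˢ A) ≤ gaussMeasure (θᵀ *ᵥ φ) S A) := by
  intro γ ρ v r
  have hmap : Measurable fun w : Fin n → ℝ => (θᵀ *ᵥ φ + w, θᵀ *ᵥ φ + w) := by fun_prop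
  have hmass : v univ =
      ENNReal.ofReal (2 * stdNormalCdf (-(1 / 2) * Real.sqrt (γ ⬝ᵥ (S⁻¹ *ᵥ γ)))) := by
    rw [← min_mass S hS γ]
    simp only [v, ρ]
    rw [Measure.map_apply hmap MeasurableSet.univ, preimage_univ,
      withDensity_apply _ MeasurableSet.univ, Measure.restrict_univ]
  have key : ∀ (μ : Fin n → ℝ), (∀ w, min (gaussDensity 0 S w) (gaussDensity (-γ) S w) ≤
      gaussDensity μ S (θᵀ *ᵥ φ + w)) → ∀ A : Set (Fin n → ℝ), MeasurableSet A →
      ρ ((fun w => θᵀ *ᵥ φ + w) ⁻¹' A) ≤ gaussMeasure μ S A := by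
    intro μ h A hA
    have hA' : MeasurableSet ((fun w => θᵀ *ᵥ φ + w) ⁻¹' A) :=
      (measurable_const_add _) hA
    simp only [ρ]
    rw [gaussMeasure, withDensity_apply _ hA', withDensity_apply _ hA, ← lintegral_indicator hA,
      ← lintegral_indicator hA', ← lintegral_add_left_eq_self (A.indicator _) (θᵀ *ᵥ φ)]
    refine lintegral_mono fun w => ?_
    by_cases hw : θᵀ *ᵥ φ + w ∈ A
    · rw [indicator_of_mem hw, indicator_of_mem (by exact hw)]
      exact ENNReal.ofReal_le_ofReal (h w)
    · rw [indicator_of_notMem (by exact hw)]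
      exact zero_le
  refine ⟨?_, hmass, ?_, ?_, ?_⟩
  · simp only [v]
    rw [Measure.map_apply hmap MeasurableSet.univ,
      Measure.map_apply hmap (measurableSet_eq_fun measurable_fst measurable_snd)]
    congr 1
    ext w; simp
  · rw [hmass]
    apply stdCdf_mono
    have hb : γ ⬝ᵥ (S⁻¹ *ᵥ γ) ≤ r * (φ ⬝ᵥ φ) := by
      have hφ : 0 ≤ φ ⬝ᵥ φ := Finset.sum_nonneg fun i _ => mul_self_nonneg _
      have h1 := spec_quad S⁻¹ γ
      have h2 : γ ⬝ᵥ γ ≤ _ := frob_bound (θ - θhat) φ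
      have h3 := spec_inv SN hSN (vecOf (θ - θhat))
      have h4 := mul_le_mul_of_nonneg_left hmem (specNorm_nonneg SN)
      have h5 := mul_le_mul_of_nonneg_right (h3.trans h4) hφ
      have h6 := mul_le_mul_of_nonneg_left (h2.trans h5) (specNorm_nonneg S⁻¹)
      refine h1.trans (h6.trans (le_of_eq ?_))
      simp only [r]; ring
    have hr : 0 ≤ r := mul_nonneg (mul_nonneg (specNorm_nonneg _) (specNorm_nonneg _)) hc
    have := Real.sqrt_le_sqrt hb
    rw [Real.sqrt_mul hr] at this
    unfold euclNorm
    linarith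
  · intro A hA
    simp only [v]
    rw [Measure.map_apply hmap (hA.prod MeasurableSet.univ)]
    have e : (fun w : Fin n → ℝ => (θᵀ *ᵥ φ + w, θᵀ *ᵥ φ + w)) ⁻¹' (A ×ˢ univ) =
        (fun w => θᵀ *ᵥ φ + w) ⁻¹' A := by ext w; simp
    rw [e]
    refine key _ (fun w => (min_le_right _ _).trans (le_of_eq ?_)) A hA
    have e2 : w - -γ = θᵀ *ᵥ φ + w - θhatᵀ *ᵥ φ := by
      simp only [γ, transpose_sub, sub_mulVec]; abel
    simp only [gaussDensity, e2]
  · intro A hA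
    simp only [v]
    rw [Measure.map_apply hmap (MeasurableSet.univ.prod hA)]
    have e : (fun w : Fin n → ℝ => (θᵀ *ᵥ φ + w, θᵀ *ᵥ φ + w)) ⁻¹' (univ ×ˢ A) =
        (fun w => θᵀ *ᵥ φ + w) ⁻¹' A := by ext w; simp
    rw [e]
    refine key _ (fun w => (min_le_left _ _).trans (le_of_eq ?_)) A hA
    simp [gaussDensity]
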